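/- Let 0 < d < 2 and set α* = arcsin(d/2). Then: (i) d_LR(d,σ,α*) ≥ 2 for all σ ∈ [0,π], with equality if and only if σ ∈ {0, π}; (ii) d_LR(d,σ,π/2) = d < 2 for all σ; (iii) for each σ ∈ (0, π) the map δ ↦ d_LR(d,σ,δ) is strictly decreasing on (0, π/2), and there is a unique δ_LR(σ) ∈ (α*, π/2) with d_LR(d,σ,δ_LR(σ)) = 2; moreover for δ ∈ [α*, π/2] one has d_LR(d,σ,δ) < 2 if δ > δ_LR(σ) and d_LR(d,σ,δ) > 2 if δ < δ_LR(σ). -/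

import Mathlib

open Real

/-- Distance between the center of the left starting disk and the right final disk,
in `(σ, δ)` coordinates. -/
noncomputable def dLR (d σ δ : ℝ) : ℝ :=
  Real.sqrt (d ^ 2 + 4 * d * Real.cos δ * Real.sin σ + 4 * Real.cos δ ^ 2)

theorem dLR_anti_aux (d σ : ℝ) (hd0 : 0 < d) (hσ : 0 < Real.sin σ) :
    StrictAntiOn (fun δ => dLR d σ δ) (Set.Icc 0 (π / 2)) := by
  intro a ha b hb hab
  have hpi := Real.pi_pos
  have hc : Real.cos b < Real.cos a :=
    Real.strictAntiOn_cos ⟨ha.1, by linarith [ha.2]⟩ ⟨hb.1, by linarith [hb.2]⟩ hab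
  have hb0 : 0 ≤ Real.cos b :=
    Real.cos_nonneg_of_mem_Icc ⟨by linarith [hb.1], hb.2⟩
  have hp : 0 < d * Real.sin σ := mul_pos hd0 hσ
  have h1 : d * Real.sin σ * Real.cos b < d * Real.sin σ * Real.cos a :=
    mul_lt_mul_of_pos_left hc hp
  have h2 : 0 ≤ d * Real.sin σ * Real.cos b := mul_nonneg hp.le hb0
  apply Real.sqrt_lt_sqrt
  · nlinarith [sq_nonneg d, sq_nonneg (Real.cos b)]
  · nlinarith

theorem dLR_alpha_aux (d σ : ℝ) (hd0 : 0 < d) (hd2 : d < 2) :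
    0 < Real.cos (Real.arcsin (d / 2)) ∧ dLR d σ (Real.arcsin (d / 2)) =
      Real.sqrt (4 + 4 * d * Real.cos (Real.arcsin (d / 2)) * Real.sin σ) := by
  have hs : Real.sin (Real.arcsin (d / 2)) = d / 2 :=
    Real.sin_arcsin (by linarith) (by linarith)
  have hsq := Real.sin_sq_add_cos_sq (Real.arcsin (d / 2))
  rw [hs] at hsq
  refine ⟨?_, ?_⟩
  · rcases (Real.cos_arcsin_nonneg (d / 2)).lt_or_eq with h | h
    · exact h
    · rw [← h] at hsq
      nlinarith
  · unfold dLR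
    congr 1
    linarith

theorem dLR_two_lt_aux (d σ : ℝ) (hd0 : 0 < d) (hd2 : d < 2) (hσ : 0 < Real.sin σ) :
    2 < dLR d σ (Real.arcsin (d / 2)) := by
  obtain ⟨hc, he⟩ := dLR_alpha_aux d σ hd0 hd2
  rw [he]
  apply Real.lt_sqrt_of_sq_lt
  have : 0 < d * Real.cos (Real.arcsin (d / 2)) * Real.sin σ := mul_pos (mul_pos hd0 hc) hσ
  linarith

theorem dLR_half_pi_aux (d σ : ℝ) (hd0 : 0 < d) : dLR d σ (π / 2) = d := by
  simp [dLR, Real.sqrt_sq hd0.le]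

/-- Let `0 < d < 2` and `α* = arcsin (d/2)`.
(i) `d_LR(d, σ, α*) ≥ 2` for `σ ∈ [0, π]`, with equality iff `σ ∈ {0, π}`;
(ii) `d_LR(d, σ, π/2) = d < 2` for all `σ`;
(iii) for each `σ ∈ (0, π)`, `δ ↦ d_LR(d, σ, δ)` is strictly decreasing on
`(0, π/2)` and there is a unique `δ₀ ∈ (α*, π/2)` with `d_LR(d, σ, δ₀) = 2`;
moreover for `δ ∈ [α*, π/2]`, `d_LR < 2` if `δ > δ₀` and `d_LR > 2` if `δ < δ₀`. -/
theorem dLR_boundary_curve (d : ℝ) (hd0 : 0 < d) (hd2 : d < 2) :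
    (∀ σ ∈ Set.Icc (0:ℝ) π,
      2 ≤ dLR d σ (Real.arcsin (d / 2)) ∧
        (dLR d σ (Real.arcsin (d / 2)) = 2 ↔ σ = 0 ∨ σ = π)) ∧
    (∀ σ : ℝ, dLR d σ (π / 2) = d ∧ d < 2) ∧
    (∀ σ ∈ Set.Ioo (0:ℝ) π,
      StrictAntiOn (fun δ => dLR d σ δ) (Set.Ioo 0 (π / 2)) ∧
      ∃ δ₀ ∈ Set.Ioo (Real.arcsin (d / 2)) (π / 2),
        dLR d σ δ₀ = 2 ∧
        (∀ δ ∈ Set.Ioo (Real.arcsin (d / 2)) (π / 2), dLR d σ δ = 2 → δ = δ₀) ∧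
        (∀ δ ∈ Set.Icc (Real.arcsin (d / 2)) (π / 2),
          (δ₀ < δ → dLR d σ δ < 2) ∧ (δ < δ₀ → 2 < dLR d σ δ))) := by
  have h4 : Real.sqrt 4 = 2 := by
    rw [show (4:ℝ) = 2 ^ 2 by norm_num]
    exact Real.sqrt_sq (by norm_num)
  refine ⟨?_, fun σ => ⟨dLR_half_pi_aux d σ hd0, hd2⟩, ?_⟩
  · intro σ hσ
    by_cases h : σ = 0 ∨ σ = π
    · have hs : Real.sin σ = 0 := by
        rcases h with h | h <;> simp [h]
      have he : dLR d σ (Real.arcsin (d / 2)) = 2 := by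
        rw [(dLR_alpha_aux d σ hd0 hd2).2, hs, mul_zero, add_zero, h4]
      exact ⟨he.ge, fun _ => h, fun _ => he⟩
    · have h0 : σ ≠ 0 := fun e => h (Or.inl e)
      have h1 : σ ≠ π := fun e => h (Or.inr e)
      have hlt := dLR_two_lt_aux d σ hd0 hd2
        (Real.sin_pos_of_pos_of_lt_pi (lt_of_le_of_ne hσ.1 h0.symm) (lt_of_le_of_ne hσ.2 h1))
      exact ⟨hlt.le, fun e => absurd e hlt.ne', fun e => absurd e h⟩
  · intro σ hσ
    have hs := Real.sin_pos_of_pos_of_lt_pi hσ.1 hσ.2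
    have hanti := dLR_anti_aux d σ hd0 hs
    have hlt := dLR_two_lt_aux d σ hd0 hd2 hs
    have hpi := dLR_half_pi_aux d σ hd0
    have ha0 : 0 ≤ Real.arcsin (d / 2) := Real.arcsin_nonneg.2 (by linarith)
    have ha1 : Real.arcsin (d / 2) ≤ π / 2 := Real.arcsin_le_pi_div_two _
    have hcont : ContinuousOn (fun δ => dLR d σ δ) (Set.Icc (Real.arcsin (d / 2)) (π / 2)) := by
      apply Continuous.continuousOn
      unfold dLR
      fun_prop
    have hmem : (2:ℝ) ∈ Set.Ioo (dLR d σ (π / 2)) (dLR d σ (Real.arcsin (d / 2))) :=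
      ⟨by rw [hpi]; exact hd2, hlt⟩
    obtain ⟨δ₀, hδ, he⟩ := intermediate_value_Ioo' ha1 hcont hmem
    have he' : dLR d σ δ₀ = 2 := he
    have hm0 : δ₀ ∈ Set.Icc 0 (π / 2) := ⟨ha0.trans hδ.1.le, hδ.2.le⟩
    refine ⟨hanti.mono Set.Ioo_subset_Icc_self, δ₀, hδ, he', ?_, ?_⟩
    · intro δ hd h
      exact hanti.injOn ⟨ha0.trans hd.1.le, hd.2.le⟩ hm0 (h.trans he'.symm)
    · intro δ hd
      have hm : δ ∈ Set.Icc 0 (π / 2) := ⟨ha0.trans hd.1, hd.2⟩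
      rw [← he']
      exact ⟨fun h => hanti hm0 hm h, fun h => hanti hm hm0 h⟩
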